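/- arXiv:0906.4406 — 2 statements merged into one kernel-verified Lean document; each statement's English description precedes it below -/
import Mathlib

section
/- At every point (x,ξ) with ξ ≠ 0 one has Re τ = 0 and Im τ = (1/2)( Σ_{j=1}^d ∂_{ξ_j}λ⁽¹⁾ ∂_{x_j}h⁽²⁾ − Σ_{j=1}^d ∂_{ξ_j}h⁽²⁾ ∂_{x_j}λ⁽¹⁾ ). -/
/-- Partial derivative in the `j`-th coordinate direction. -/
noncomputable def pd {d : ℕ} (j : Fin d) (f : EuclideanSpace ℝ (Fin d) → ℝ)
    (x : EuclideanSpace ℝ (Fin d)) : ℝ :=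
  fderiv ℝ f x (EuclideanSpace.single j 1)

/-!
Write `M f = ∑ ∂ₓ∂_ξ f` and `B f g = ∑ ∂_ξ f ∂ₓ g`. The Leibniz rule gives
`M (f g) = f M g + M f g + B f g + B g f`, so applying `M` to `γ² = h λ` yields
`2 (γ M γ + B γ γ) = h M λ + M h λ + B h λ + B λ h`. With the prescribed imaginary parts,
`Im τ = γ M γ + B γ γ - (h M λ + M h λ) / 2 - B h λ`, so all second derivatives cancel and
`(B λ h - B h λ) / 2` remains. In `Re τ` only `h Re λ₀ - 2 γ Re γ₁₂` survives, and `Re γ₁₂` is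
chosen to make it vanish.
-/

open Filter Function Topology

section Leibniz

variable {𝕜 E F A ι : Type*} [NontriviallyNormedField 𝕜]
  [NormedAddCommGroup E] [NormedSpace 𝕜 E] [NormedAddCommGroup F] [NormedSpace 𝕜 F]

section PartialDifferentiability

variable [NormedAddCommGroup A] [NormedSpace 𝕜 A] {f : E → F → A} {x : E} {ξ : F}

lemma differentiableAt_left_of_uncurry (hf : DifferentiableAt 𝕜 (uncurry f) (x, ξ)) :
    DifferentiableAt 𝕜 (fun x' => f x' ξ) x :=
  hf.comp x (f := fun x' => (x', ξ)) (by fun_prop)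

lemma differentiableAt_right_of_uncurry (hf : DifferentiableAt 𝕜 (uncurry f) (x, ξ)) :
    DifferentiableAt 𝕜 (f x) ξ :=
  hf.comp ξ (f := fun ξ' => (x, ξ')) (by fun_prop)

lemma eventually_differentiableAt_right (hf : ContDiffAt 𝕜 1 (uncurry f) (x, ξ)) :
    ∀ᶠ x' in 𝓝 x, DifferentiableAt 𝕜 (f x') ξ := by
  have hnear : ∀ᶠ p in 𝓝 (x, ξ), DifferentiableAt 𝕜 (uncurry f) p :=
    (hf.eventually (by simp)).mono fun _ hp => hp.differentiableAt one_ne_zero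
  have hslice : Tendsto (fun x' => (x', ξ)) (𝓝 x) (𝓝 (x, ξ)) :=
    Continuous.tendsto (by fun_prop) x
  exact (hslice.eventually hnear).mono fun _ => differentiableAt_right_of_uncurry

lemma differentiableAt_fderiv_right_apply (hf : ContDiffAt 𝕜 2 (uncurry f) (x, ξ)) (w : F) :
    DifferentiableAt 𝕜 (fun x' => fderiv 𝕜 (f x') ξ w) x :=
  ((hf.fderiv contDiffAt_const one_add_one_eq_two.le).differentiableAt one_ne_zero).clm_apply
    (differentiableAt_const w)

end PartialDifferentiability

lemma fderiv_fderiv_right_mul [NormedCommRing A] [NormedAlgebra 𝕜 A]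
    {f g : E → F → A} {x : E} {ξ : F}
    (hf : ContDiffAt 𝕜 2 (uncurry f) (x, ξ)) (hg : ContDiffAt 𝕜 2 (uncurry g) (x, ξ))
    (v : E) (w : F) :
    fderiv 𝕜 (fun x' => fderiv 𝕜 (fun ξ' => f x' ξ' * g x' ξ') ξ w) x v =
      f x ξ * fderiv 𝕜 (fun x' => fderiv 𝕜 (g x') ξ w) x v
        + fderiv 𝕜 (fun x' => fderiv 𝕜 (f x') ξ w) x v * g x ξ
        + fderiv 𝕜 (f x) ξ w * fderiv 𝕜 (fun x' => g x' ξ) x v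
        + fderiv 𝕜 (g x) ξ w * fderiv 𝕜 (fun x' => f x' ξ) x v := by
  have hfx := differentiableAt_left_of_uncurry (hf.differentiableAt two_ne_zero)
  have hgx := differentiableAt_left_of_uncurry (hg.differentiableAt two_ne_zero)
  have hfξ := differentiableAt_fderiv_right_apply hf w
  have hgξ := differentiableAt_fderiv_right_apply hg w
  have inner_leibniz : (fun x' => fderiv 𝕜 (fun ξ' => f x' ξ' * g x' ξ') ξ w) =ᶠ[𝓝 x]
      fun x' => f x' ξ * fderiv 𝕜 (g x') ξ w + g x' ξ * fderiv 𝕜 (f x') ξ w := by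
    filter_upwards [eventually_differentiableAt_right (hf.of_le one_le_two),
      eventually_differentiableAt_right (hg.of_le one_le_two)] with x' hf' hg'
    simp only [fderiv_fun_mul hf' hg', add_apply, smul_apply, smul_eq_mul]
  rw [inner_leibniz.fderiv_eq, fderiv_fun_add (hfx.fun_mul hgξ) (hgx.fun_mul hfξ),
    fderiv_fun_mul hfx hgξ, fderiv_fun_mul hgx hfξ]
  simp only [add_apply, smul_apply, smul_eq_mul]
  ring

variable [Fintype ι]

variable (𝕜) in
/-- The second-order operator `M f = ∑ᵢ ∂ₓ^{vᵢ} ∂_ξ^{wᵢ} f`. For `v = w` the standard basis it is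
`∑ⱼ ∂_{xⱼ} ∂_{ξⱼ}`, which gives, up to the factor `1 / i`, the first correction in the symbol of an
adjoint. -/
noncomputable def mixedDeriv [NormedAddCommGroup A] [NormedSpace 𝕜 A]
    (v : ι → E) (w : ι → F) (f : E → F → A) (x : E) (ξ : F) : A :=
  ∑ i, fderiv 𝕜 (fun x' => fderiv 𝕜 (f x') ξ (w i)) x (v i)

variable (𝕜) in
/-- The bilinear pairing `B f g = ∑ᵢ ∂_ξ^{wᵢ} f · ∂ₓ^{vᵢ} g`. For `v = w` the standard basis it is,
up to the factor `1 / i`, the first-order term in the composition of the symbols `f` and `g`. -/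
noncomputable def derivPairing [NormedRing A] [NormedAlgebra 𝕜 A]
    (v : ι → E) (w : ι → F) (f g : E → F → A) (x : E) (ξ : F) : A :=
  ∑ i, fderiv 𝕜 (f x) ξ (w i) * fderiv 𝕜 (fun x' => g x' ξ) x (v i)

lemma mixedDeriv_congr [NormedAddCommGroup A] [NormedSpace 𝕜 A] {f g : E → F → A} {x : E} {ξ : F}
    (hfg : uncurry f =ᶠ[𝓝 (x, ξ)] uncurry g) (v : ι → E) (w : ι → F) :
    mixedDeriv 𝕜 v w f x ξ = mixedDeriv 𝕜 v w g x ξ := by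
  have hslices : ∀ᶠ x' in 𝓝 x, f x' =ᶠ[𝓝 ξ] g x' := hfg.curry_nhds
  refine Finset.sum_congr rfl fun i _ => ?_
  have hinner : (fun x' => fderiv 𝕜 (f x') ξ (w i)) =ᶠ[𝓝 x]
      fun x' => fderiv 𝕜 (g x') ξ (w i) :=
    hslices.mono fun x' hx' => by simp only [hx'.fderiv_eq]
  rw [hinner.fderiv_eq]

lemma mixedDeriv_mul [NormedCommRing A] [NormedAlgebra 𝕜 A] {f g : E → F → A} {x : E} {ξ : F}
    (hf : ContDiffAt 𝕜 2 (uncurry f) (x, ξ)) (hg : ContDiffAt 𝕜 2 (uncurry g) (x, ξ))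
    (v : ι → E) (w : ι → F) :
    mixedDeriv 𝕜 v w (fun x' ξ' => f x' ξ' * g x' ξ') x ξ =
      f x ξ * mixedDeriv 𝕜 v w g x ξ + mixedDeriv 𝕜 v w f x ξ * g x ξ
        + derivPairing 𝕜 v w f g x ξ + derivPairing 𝕜 v w g f x ξ := by
  simp only [mixedDeriv, derivPairing, fderiv_fderiv_right_mul hf hg, Finset.sum_add_distrib,
    Finset.mul_sum, Finset.sum_mul]

lemma two_mul_mixedDeriv_add_derivPairing_of_sq_eq [NormedCommRing A] [NormedAlgebra 𝕜 A]
    {γ h l : E → F → A} {x : E} {ξ : F}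
    (hγ : ContDiffAt 𝕜 2 (uncurry γ) (x, ξ)) (hh : ContDiffAt 𝕜 2 (uncurry h) (x, ξ))
    (hl : ContDiffAt 𝕜 2 (uncurry l) (x, ξ))
    (hsq : ∀ᶠ p in 𝓝 (x, ξ), γ p.1 p.2 ^ 2 = h p.1 p.2 * l p.1 p.2)
    (v : ι → E) (w : ι → F) :
    2 * (γ x ξ * mixedDeriv 𝕜 v w γ x ξ + derivPairing 𝕜 v w γ γ x ξ) =
      h x ξ * mixedDeriv 𝕜 v w l x ξ + mixedDeriv 𝕜 v w h x ξ * l x ξ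
        + derivPairing 𝕜 v w h l x ξ + derivPairing 𝕜 v w l h x ξ :=
  calc
    _ = mixedDeriv 𝕜 v w (fun x' ξ' => γ x' ξ' * γ x' ξ') x ξ := by
      rw [mixedDeriv_mul hγ hγ]
      ring
    _ = mixedDeriv 𝕜 v w (fun x' ξ' => h x' ξ' * l x' ξ') x ξ :=
      mixedDeriv_congr (f := fun x' ξ' => γ x' ξ' * γ x' ξ') (g := fun x' ξ' => h x' ξ' * l x' ξ')
        (hsq.mono fun p hp => (sq (γ p.1 p.2)).symm.trans hp) v w
    _ = _ := mixedDeriv_mul hh hl v w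

end Leibniz

theorem tau_real_and_imaginary_parts_general {E F ι : Type*} [Fintype ι]
    [NormedAddCommGroup E] [NormedSpace ℝ E] [NormedAddCommGroup F] [NormedSpace ℝ F]
    (v : ι → E) (w : ι → F) {h2 lam1 gam : E → F → ℝ} {x : E} {ξ : F}
    (hh2 : ContDiffAt ℝ 2 (uncurry h2) (x, ξ)) (hlam1 : ContDiffAt ℝ 2 (uncurry lam1) (x, ξ))
    (hgam : ContDiffAt ℝ 2 (uncurry gam) (x, ξ)) (hgam_ne : gam x ξ ≠ 0)
    (hgam_sq : ∀ᶠ p in 𝓝 (x, ξ), gam p.1 p.2 ^ 2 = h2 p.1 p.2 * lam1 p.1 p.2)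
    {h1 lam0 gam12 τ : ℂ}
    (hh1 : h1 = -(Complex.I / 2) * ((mixedDeriv ℝ v w h2 x ξ : ℝ) : ℂ))
    (hlam0_im : lam0.im = -(1 / 2) * mixedDeriv ℝ v w lam1 x ξ)
    (hgam12_im : gam12.im = -(1 / 2) * mixedDeriv ℝ v w gam x ξ)
    (hgam12_re : gam12.re = h2 x ξ * lam0.re / (2 * gam x ξ))
    (hτ : τ = (1 / Complex.I) * ((derivPairing ℝ v w h2 lam1 x ξ : ℝ) : ℂ) + h1 * (lam1 x ξ : ℂ)
      + (h2 x ξ : ℂ) * lam0 - 2 * gam12 * (gam x ξ : ℂ)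
      + Complex.I * ((derivPairing ℝ v w gam gam x ξ : ℝ) : ℂ)) :
    τ.re = 0 ∧ τ.im =
      (1 / 2) * (derivPairing ℝ v w lam1 h2 x ξ - derivPairing ℝ v w h2 lam1 x ξ) := by
  have τ_re : τ.re = h2 x ξ * lam0.re - 2 * gam12.re * gam x ξ := by
    simp [hτ, hh1]
  have τ_im : τ.im = -derivPairing ℝ v w h2 lam1 x ξ - 1 / 2 * mixedDeriv ℝ v w h2 x ξ * lam1 x ξ
      + h2 x ξ * lam0.im - 2 * gam12.im * gam x ξ + derivPairing ℝ v w gam gam x ξ := by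
    simp [hτ, hh1, sub_eq_add_neg]
  constructor
  · rw [τ_re, hgam12_re]
    field_simp
    ring
  · rw [τ_im, hlam0_im, hgam12_im]
    linarith [two_mul_mixedDeriv_add_derivPairing_of_sq_eq hgam hh2 hlam1 hgam_sq v w]

/-- The symbol `τ` arising in the construction of the symmetrizer is purely imaginary,
with imaginary part `(1/2)(Σ ∂_ξλ⁽¹⁾∂_xh⁽²⁾ − Σ ∂_ξh⁽²⁾∂_xλ⁽¹⁾)`. -/
theorem tau_real_and_imaginary_parts
    (d : ℕ) (hd : 1 ≤ d)
    (h2 lam1 gam : EuclideanSpace ℝ (Fin d) → EuclideanSpace ℝ (Fin d) → ℝ)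
    (hh2smooth : ContDiffOn ℝ 2
      (fun p : EuclideanSpace ℝ (Fin d) × EuclideanSpace ℝ (Fin d) => h2 p.1 p.2)
      {p : EuclideanSpace ℝ (Fin d) × EuclideanSpace ℝ (Fin d) | p.2 ≠ 0})
    (hlam1smooth : ContDiffOn ℝ 2
      (fun p : EuclideanSpace ℝ (Fin d) × EuclideanSpace ℝ (Fin d) => lam1 p.1 p.2)
      {p : EuclideanSpace ℝ (Fin d) × EuclideanSpace ℝ (Fin d) | p.2 ≠ 0})
    (hgamsmooth : ContDiffOn ℝ 2
      (fun p : EuclideanSpace ℝ (Fin d) × EuclideanSpace ℝ (Fin d) => gam p.1 p.2)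
      {p : EuclideanSpace ℝ (Fin d) × EuclideanSpace ℝ (Fin d) | p.2 ≠ 0})
    (hgampos : ∀ x ξ, ξ ≠ 0 → 0 < gam x ξ)
    (hgamsq : ∀ x ξ, ξ ≠ 0 → (gam x ξ) ^ 2 = h2 x ξ * lam1 x ξ)
    (h1 : EuclideanSpace ℝ (Fin d) → EuclideanSpace ℝ (Fin d) → ℂ)
    (hh1 : ∀ x ξ, h1 x ξ = -(Complex.I / 2)
      * ((∑ j, pd j (fun x' => pd j (fun ξ' => h2 x' ξ') ξ) x : ℝ) : ℂ))
    (lam0 gam12 : EuclideanSpace ℝ (Fin d) → EuclideanSpace ℝ (Fin d) → ℂ)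
    (hlam0im : ∀ x ξ, ξ ≠ 0 → (lam0 x ξ).im
      = -(1 / 2) * ∑ j, pd j (fun x' => pd j (fun ξ' => lam1 x' ξ') ξ) x)
    (hgam12im : ∀ x ξ, ξ ≠ 0 → (gam12 x ξ).im
      = -(1 / 2) * ∑ j, pd j (fun x' => pd j (fun ξ' => gam x' ξ') ξ) x)
    (hgam12re : ∀ x ξ, ξ ≠ 0 → (gam12 x ξ).re
      = h2 x ξ * (lam0 x ξ).re / (2 * gam x ξ))
    (τ : EuclideanSpace ℝ (Fin d) → EuclideanSpace ℝ (Fin d) → ℂ)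
    (hτ : ∀ x ξ, τ x ξ
      = (1 / Complex.I)
          * ((∑ j, pd j (fun ξ' => h2 x ξ') ξ * pd j (fun x' => lam1 x' ξ) x : ℝ) : ℂ)
        + h1 x ξ * ((lam1 x ξ : ℝ) : ℂ)
        + ((h2 x ξ : ℝ) : ℂ) * lam0 x ξ
        - 2 * gam12 x ξ * ((gam x ξ : ℝ) : ℂ)
        + Complex.I
          * ((∑ j, pd j (fun ξ' => gam x ξ') ξ * pd j (fun x' => gam x' ξ) x : ℝ) : ℂ)) :
    ∀ (x ξ : EuclideanSpace ℝ (Fin d)), ξ ≠ 0 →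
      (τ x ξ).re = 0 ∧
      (τ x ξ).im = (1 / 2) *
        ((∑ j, pd j (fun ξ' => lam1 x ξ') ξ * pd j (fun x' => h2 x' ξ) x)
          - ∑ j, pd j (fun ξ' => h2 x ξ') ξ * pd j (fun x' => lam1 x' ξ) x) := by
  intro x ξ hξ
  have hnhds : {p : EuclideanSpace ℝ (Fin d) × EuclideanSpace ℝ (Fin d) | p.2 ≠ 0} ∈ 𝓝 (x, ξ) :=
    (isOpen_ne.preimage continuous_snd).mem_nhds hξ
  exact tau_real_and_imaginary_parts_general
    (fun j => EuclideanSpace.single j 1) (fun j => EuclideanSpace.single j 1)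
    (hh2smooth.contDiffAt hnhds) (hlam1smooth.contDiffAt hnhds) (hgamsmooth.contDiffAt hnhds)
    (hgampos x ξ hξ).ne' (eventually_of_mem hnhds fun p hp => hgamsq p.1 p.2 hp)
    (hh1 x ξ) (hlam0im x ξ hξ) (hgam12im x ξ hξ) (hgam12re x ξ hξ) (hτ x ξ)
end

section
/- Let c₀ > 0 and δ > 0. There exist a function a : ℝ × (ℝ \ {0}) → ℝ and a constant K > 0 such that: a is C^∞, a is homogeneous of degree 0 in ξ (a(x, sξ) = a(x,ξ) for all s > 0), all derivatives ∂_x^j ∂_ξ^k a are bounded on ℝ × {ξ : |ξ| = 1}, and for every differentiable function c : ℝ → ℝ with c(x) ≥ c₀ for all x, one has {c(x)|ξ|^{3/2}, a}(x,ξ) ≥ K ⟨x⟩^{−1−δ} |ξ|^{1/2} for all x ∈ ℝ and all ξ ≠ 0. -/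
/-- The operator `∂_x` acting on symbols of `(x,ξ) ∈ ℝ × ℝ`. -/
noncomputable def pdX (f : ℝ → ℝ → ℝ) : ℝ → ℝ → ℝ :=
  fun x ξ => deriv (fun x' => f x' ξ) x

/-- The operator `∂_ξ` acting on symbols of `(x,ξ) ∈ ℝ × ℝ`. -/
noncomputable def pdXi (f : ℝ → ℝ → ℝ) : ℝ → ℝ → ℝ :=
  fun x ξ => deriv (fun ξ' => f x ξ') ξ

/-!
Take `a(x, ξ) = sign ξ · F(x)`. Away from `ξ = 0` the sign is locally constant, so only one term of
the bracket survives and `{c |ξ|^p, a} = p c(x) |ξ|^(p - 1) F'(x)`: no derivative of `c` appears,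
which is why the bound is uniform in `c`. It remains to find `F` with all derivatives bounded and
`F' ≥ δ ⟨x⟩^(-1 - δ)`. An explicit choice is `F(x) = (1 + δ) x ⟨x⟩⁻¹ - x ⟨x⟩^(-1 - δ)`, for which
`F' = (1 + δ) ⟨x⟩⁻³ + (δ x² - 1) ⟨x⟩^(-3 - δ)`; bounding `⟨x⟩⁻³` below by `⟨x⟩^(-3 - δ)` leaves
`F' ≥ δ (1 + x²) ⟨x⟩^(-3 - δ)`.
-/

open scoped ContDiff Topology

section BoundedDerivs

variable {𝕜 : Type*} [NontriviallyNormedField 𝕜]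

/-- A smooth function on the line that is bounded together with each of its derivatives, the bound
being allowed to depend on the order. -/
structure HasBoundedDerivs {E : Type*} [NormedAddCommGroup E] [NormedSpace 𝕜 E] (f : 𝕜 → E) :
    Prop where
  contDiff : ContDiff 𝕜 ∞ f
  exists_norm_iteratedDeriv_le : ∀ n : ℕ, ∃ M : ℝ, ∀ x, ‖iteratedDeriv n f x‖ ≤ M

namespace HasBoundedDerivs

theorem sub {E : Type*} [NormedAddCommGroup E] [NormedSpace 𝕜 E] {f g : 𝕜 → E}
    (hf : HasBoundedDerivs f) (hg : HasBoundedDerivs g) :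
    HasBoundedDerivs fun x => f x - g x where
  contDiff := hf.contDiff.sub hg.contDiff
  exists_norm_iteratedDeriv_le n := by
    obtain ⟨M, hM⟩ := hf.exists_norm_iteratedDeriv_le n
    obtain ⟨N, hN⟩ := hg.exists_norm_iteratedDeriv_le n
    refine ⟨M + N, fun x => ?_⟩
    rw [iteratedDeriv_fun_sub (hf.contDiff.of_le (mod_cast le_top)).contDiffAt
      (hg.contDiff.of_le (mod_cast le_top)).contDiffAt]
    exact norm_sub_le_of_le (hM x) (hN x)

theorem const_mul {f : 𝕜 → 𝕜} (hf : HasBoundedDerivs f) (c : 𝕜) :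
    HasBoundedDerivs fun x => c * f x where
  contDiff := contDiff_const.mul hf.contDiff
  exists_norm_iteratedDeriv_le n := by
    obtain ⟨M, hM⟩ := hf.exists_norm_iteratedDeriv_le n
    refine ⟨‖c‖ * M, fun x => ?_⟩
    rw [iteratedDeriv_const_mul_field, norm_mul]
    gcongr
    exact hM x

end HasBoundedDerivs

end BoundedDerivs

/-- The Japanese bracket `⟨x⟩ = (1 + x²)^(1/2)`. -/
noncomputable def japaneseBracket (x : ℝ) : ℝ := √(1 + x ^ 2)

theorem japaneseBracket_sq (x : ℝ) : japaneseBracket x ^ 2 = 1 + x ^ 2 :=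
  Real.sq_sqrt (by positivity)

theorem one_le_japaneseBracket (x : ℝ) : 1 ≤ japaneseBracket x :=
  Real.one_le_sqrt.2 (le_add_of_nonneg_right (sq_nonneg x))

theorem japaneseBracket_pos (x : ℝ) : 0 < japaneseBracket x :=
  one_pos.trans_le (one_le_japaneseBracket x)

theorem abs_le_japaneseBracket (x : ℝ) : |x| ≤ japaneseBracket x :=
  Real.abs_le_sqrt (le_add_of_nonneg_left zero_le_one)

theorem contDiff_japaneseBracket {n : WithTop ℕ∞} : ContDiff ℝ n japaneseBracket :=
  ContDiff.sqrt (by fun_prop) fun x => by positivity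

theorem hasDerivAt_japaneseBracket (x : ℝ) :
    HasDerivAt japaneseBracket (x / japaneseBracket x) x := by
  have h : HasDerivAt (fun y : ℝ => 1 + y ^ 2) (2 * x) x := by
    simpa using (hasDerivAt_pow 2 x).const_add 1
  refine (h.sqrt (by positivity)).congr_deriv ?_
  rw [mul_div_mul_left _ _ two_ne_zero, japaneseBracket]

theorem contDiff_pow_mul_japaneseBracket_rpow (m : ℕ) (r : ℝ) {n : WithTop ℕ∞} :
    ContDiff ℝ n fun x => x ^ m * japaneseBracket x ^ r :=
  (contDiff_id.pow m).mul <|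
    contDiff_japaneseBracket.rpow_const_of_ne fun x => (japaneseBracket_pos x).ne'

theorem hasDerivAt_pow_mul_japaneseBracket_rpow (m : ℕ) (r x : ℝ) :
    HasDerivAt (fun y => y ^ m * japaneseBracket y ^ r)
      (m * (x ^ (m - 1) * japaneseBracket x ^ r)
        + r * (x ^ (m + 1) * japaneseBracket x ^ (r - 2))) x := by
  have hJ := japaneseBracket_pos x
  have hrpow := (hasDerivAt_japaneseBracket x).rpow_const (p := r) (Or.inl hJ.ne')
  refine ((hasDerivAt_pow m x).mul hrpow).congr_deriv ?_
  rw [show r - 2 = r - 1 - 1 by ring, Real.rpow_sub_one hJ.ne' (r - 1)]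
  ring

theorem abs_pow_mul_japaneseBracket_rpow_le_one {m : ℕ} {r : ℝ} (h : m + r ≤ 0) (x : ℝ) :
    |x ^ m * japaneseBracket x ^ r| ≤ 1 := by
  have hJ := japaneseBracket_pos x
  calc |x ^ m * japaneseBracket x ^ r| = |x| ^ m * japaneseBracket x ^ r := by
        rw [abs_mul, abs_pow, abs_of_pos (Real.rpow_pos_of_pos hJ r)]
    _ ≤ japaneseBracket x ^ m * japaneseBracket x ^ r := by
        gcongr
        exact abs_le_japaneseBracket x
    _ = japaneseBracket x ^ (m + r) := by rw [Real.rpow_add hJ, Real.rpow_natCast]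
    _ ≤ 1 := Real.rpow_le_one_of_one_le_of_nonpos (one_le_japaneseBracket x) h

theorem exists_norm_iteratedDeriv_pow_mul_japaneseBracket_rpow_le (n : ℕ) {m : ℕ} {r : ℝ}
    (h : m + r ≤ 0) :
    ∃ M : ℝ, ∀ x, ‖iteratedDeriv n (fun y => y ^ m * japaneseBracket y ^ r) x‖ ≤ M := by
  induction n generalizing m r with
  | zero => exact ⟨1, fun x => by simpa using abs_pow_mul_japaneseBracket_rpow_le_one h x⟩
  | succ n ih =>
    have hm : ((m - 1 : ℕ) : ℝ) ≤ m := mod_cast m.sub_le 1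
    obtain ⟨M, hM⟩ := ih (m := m - 1) (r := r) (by linarith)
    obtain ⟨N, hN⟩ := ih (m := m + 1) (r := r - 2) (by push_cast; linarith)
    refine ⟨‖(m : ℝ)‖ * M + ‖r‖ * N, fun x => ?_⟩
    rw [iteratedDeriv_succ', funext fun y => (hasDerivAt_pow_mul_japaneseBracket_rpow m r y).deriv,
      iteratedDeriv_fun_add
        (contDiff_const.mul (contDiff_pow_mul_japaneseBracket_rpow _ _)).contDiffAt
        (contDiff_const.mul (contDiff_pow_mul_japaneseBracket_rpow _ _)).contDiffAt,
      iteratedDeriv_const_mul_field, iteratedDeriv_const_mul_field]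
    refine norm_add_le_of_le ?_ ?_ <;> rw [norm_mul] <;> gcongr
    exacts [hM x, hN x]

theorem hasBoundedDerivs_pow_mul_japaneseBracket_rpow {m : ℕ} {r : ℝ} (h : m + r ≤ 0) :
    HasBoundedDerivs fun x => x ^ m * japaneseBracket x ^ r :=
  ⟨contDiff_pow_mul_japaneseBracket_rpow m r,
    fun n => exists_norm_iteratedDeriv_pow_mul_japaneseBracket_rpow_le n h⟩

/-- The spatial factor of Doi's escape function: a bounded function whose derivative is at
least `δ ⟨x⟩^(-1 - δ)`. The first powers are written `x ^ 1` to match the family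
`x ^ m * ⟨x⟩ ^ r`. -/
noncomputable def escapeProfile (δ x : ℝ) : ℝ :=
  (1 + δ) * (x ^ 1 * japaneseBracket x ^ (-1 : ℝ)) - x ^ 1 * japaneseBracket x ^ (-(1 + δ))

theorem hasBoundedDerivs_escapeProfile {δ : ℝ} (hδ : 0 ≤ δ) :
    HasBoundedDerivs (escapeProfile δ) :=
  ((hasBoundedDerivs_pow_mul_japaneseBracket_rpow (by norm_num)).const_mul (1 + δ)).sub
    (hasBoundedDerivs_pow_mul_japaneseBracket_rpow (by push_cast; linarith))

theorem deriv_escapeProfile (δ x : ℝ) :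
    deriv (escapeProfile δ) x =
      (1 + δ) * japaneseBracket x ^ (-3 : ℝ)
        + (δ * x ^ 2 - 1) * japaneseBracket x ^ (-3 - δ) := by
  have hJ := japaneseBracket_pos x
  have h := ((hasDerivAt_pow_mul_japaneseBracket_rpow 1 (-1) x).const_mul (1 + δ)).sub
    (hasDerivAt_pow_mul_japaneseBracket_rpow 1 (-(1 + δ)) x)
  have hsq (r : ℝ) :
      japaneseBracket x ^ (r + 2) = (1 + x ^ 2) * japaneseBracket x ^ r := by
    rw [Real.rpow_add hJ, Real.rpow_two, japaneseBracket_sq, mul_comm]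
  refine h.deriv.trans ?_
  rw [show (-1 : ℝ) = -3 + 2 by norm_num, show -(1 + δ) = -3 - δ + 2 by ring, hsq, hsq]
  simp only [add_sub_cancel_right]
  push_cast
  ring

theorem le_deriv_escapeProfile {δ : ℝ} (hδ : 0 ≤ δ) (x : ℝ) :
    δ * japaneseBracket x ^ (-(1 + δ)) ≤ deriv (escapeProfile δ) x := by
  have hJ := japaneseBracket_pos x
  have hmono : japaneseBracket x ^ (-3 - δ) ≤ japaneseBracket x ^ (-3 : ℝ) :=
    Real.rpow_le_rpow_of_exponent_le (one_le_japaneseBracket x) (by linarith)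
  calc δ * japaneseBracket x ^ (-(1 + δ))
      = δ * ((1 + x ^ 2) * japaneseBracket x ^ (-3 - δ)) := by
        rw [← japaneseBracket_sq, ← Real.rpow_two, ← Real.rpow_add hJ]
        ring_nf
    _ = (1 + δ) * japaneseBracket x ^ (-3 - δ)
          + (δ * x ^ 2 - 1) * japaneseBracket x ^ (-3 - δ) := by ring
    _ ≤ (1 + δ) * japaneseBracket x ^ (-3 : ℝ)
          + (δ * x ^ 2 - 1) * japaneseBracket x ^ (-3 - δ) := by gcongr
    _ = deriv (escapeProfile δ) x := (deriv_escapeProfile δ x).symm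

theorem eventuallyEq_sign_nhds {ξ : ℝ} (hξ : ξ ≠ 0) :
    (fun η : ℝ => (SignType.sign η : ℝ)) =ᶠ[𝓝 ξ] fun _ => (SignType.sign ξ : ℝ) := by
  have h := (continuousAt_sign_of_ne_zero hξ).eventually_mem (mem_nhds_discrete.2 rfl)
  filter_upwards [h] with η hη
  rw [hη]

theorem iterate_pdX_iterate_pdXi_mul (g F : ℝ → ℝ) (j k : ℕ) :
    pdX^[j] (pdXi^[k] fun x ξ => g ξ * F x) =
      fun x ξ => iteratedDeriv k g ξ * iteratedDeriv j F x := by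
  have hpdXi : pdXi^[k] (fun x ξ => g ξ * F x) = fun x ξ => iteratedDeriv k g ξ * F x := by
    induction k with
    | zero => simp
    | succ k ih =>
      rw [Function.iterate_succ_apply', ih, iteratedDeriv_succ]
      funext x ξ
      exact deriv_mul_const_field (F x)
  rw [hpdXi]
  induction j with
  | zero => simp
  | succ j ih =>
    rw [Function.iterate_succ_apply', ih, iteratedDeriv_succ]
    funext x ξ
    exact deriv_const_mul_field (iteratedDeriv k g ξ)

theorem HasBoundedDerivs.exists_abs_iterate_pdX_iterate_pdXi_mul_le {F : ℝ → ℝ}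
    (hF : HasBoundedDerivs F) (g : ℝ → ℝ) (j k : ℕ) :
    ∃ M : ℝ, ∀ x ξ : ℝ, |ξ| = 1 → |(pdX^[j] (pdXi^[k] fun x ξ => g ξ * F x)) x ξ| ≤ M := by
  obtain ⟨M, hM⟩ := hF.exists_norm_iteratedDeriv_le j
  let N := max |iteratedDeriv k g 1| |iteratedDeriv k g (-1)|
  refine ⟨N * M, fun x ξ hξ => ?_⟩
  have hN : |iteratedDeriv k g ξ| ≤ N := by
    rcases eq_or_eq_neg_of_abs_eq hξ with rfl | rfl
    exacts [le_max_left _ _, le_max_right _ _]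
  rw [iterate_pdX_iterate_pdXi_mul, abs_mul]
  exact mul_le_mul hN (hM x) (abs_nonneg _) ((abs_nonneg _).trans hN)

theorem contDiffOn_sign_mul {n : WithTop ℕ∞} {F : ℝ → ℝ} (hF : ContDiff ℝ n F) :
    ContDiffOn ℝ n (fun p : ℝ × ℝ => (SignType.sign p.2 : ℝ) * F p.1) {p | p.2 ≠ 0} := by
  rintro ⟨x, ξ⟩ (hξ : ξ ≠ 0)
  have hsign : ContDiffAt ℝ n (fun η : ℝ => (SignType.sign η : ℝ)) ξ :=
    contDiffAt_const.congr_of_eventuallyEq (eventuallyEq_sign_nhds hξ)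
  exact ((hsign.comp (x, ξ) contDiffAt_snd).mul
    (hF.comp contDiff_fst).contDiffAt).contDiffWithinAt

/-- The Poisson bracket `{f, g} = ∂_ξ f ∂_x g - ∂_x f ∂_ξ g` of two symbols; it carries its usual
meaning at points where both symbols are differentiable in each variable. -/
noncomputable def poissonBracket (f g : ℝ → ℝ → ℝ) (x ξ : ℝ) : ℝ :=
  pdXi f x ξ * pdX g x ξ - pdX f x ξ * pdXi g x ξ

theorem poissonBracket_mul_abs_rpow_sign_mul (c F : ℝ → ℝ) (p x : ℝ) {ξ : ℝ} (hξ : ξ ≠ 0) :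
    poissonBracket (fun x ξ => c x * |ξ| ^ p) (fun x ξ => (SignType.sign ξ : ℝ) * F x) x ξ =
      p * c x * |ξ| ^ (p - 1) * deriv F x := by
  have hpow : pdXi (fun x ξ => c x * |ξ| ^ p) x ξ =
      c x * (SignType.sign ξ * p * |ξ| ^ (p - 1)) :=
    (((hasDerivAt_abs hξ).rpow_const (Or.inl (abs_ne_zero.2 hξ))).const_mul (c x)).deriv
  have hsign : pdXi (fun x ξ => (SignType.sign ξ : ℝ) * F x) x ξ = 0 := by
    rw [pdXi, deriv_mul_const_field, (eventuallyEq_sign_nhds hξ).deriv_eq, deriv_const, zero_mul]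
  have hF : pdX (fun x ξ => (SignType.sign ξ : ℝ) * F x) x ξ = SignType.sign ξ * deriv F x :=
    deriv_const_mul_field _
  have hsq : (SignType.sign ξ : ℝ) * SignType.sign ξ = 1 := by
    rcases hξ.lt_or_gt with h | h <;> simp [h]
  rw [poissonBracket, hpow, hsign, hF]
  linear_combination (p * c x * |ξ| ^ (p - 1) * deriv F x) * hsq

/-- Doi's lemma: there is a bounded symbol `a(x,ξ)`, smooth and homogeneous of degree `0`
in `ξ`, whose Poisson bracket with `c(x)|ξ|^{3/2}` is bounded below by
`K ⟨x⟩^{−1−δ} |ξ|^{1/2}`, uniformly over all `c ≥ c₀`. -/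
theorem doi_escape_function (c₀ δ : ℝ) (hc₀ : 0 < c₀) (hδ : 0 < δ) :
    ∃ a : ℝ → ℝ → ℝ, ∃ K > (0 : ℝ),
      ContDiffOn ℝ (⊤ : ℕ∞) (fun p : ℝ × ℝ => a p.1 p.2) {p : ℝ × ℝ | p.2 ≠ 0} ∧
      (∀ x ξ : ℝ, ξ ≠ 0 → ∀ s : ℝ, 0 < s → a x (s * ξ) = a x ξ) ∧
      (∀ j k : ℕ, ∃ M : ℝ, ∀ x ξ : ℝ, |ξ| = 1 → |(pdX^[j] (pdXi^[k] a)) x ξ| ≤ M) ∧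
      (∀ c : ℝ → ℝ, Differentiable ℝ c → (∀ x, c₀ ≤ c x) →
        ∀ x ξ : ℝ, ξ ≠ 0 →
          K * Real.sqrt (1 + x ^ 2) ^ (-(1 + δ)) * |ξ| ^ ((1 : ℝ) / 2)
            ≤ deriv (fun ξ' => c x * |ξ'| ^ ((3 : ℝ) / 2)) ξ
                * deriv (fun x' => a x' ξ) x
              - deriv (fun x' => c x' * |ξ| ^ ((3 : ℝ) / 2)) x
                * deriv (fun ξ' => a x ξ') ξ) := by
  have hF := hasBoundedDerivs_escapeProfile hδ.le
  refine ⟨fun x ξ => SignType.sign ξ * escapeProfile δ x, 3 / 2 * c₀ * δ, by positivity,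
    contDiffOn_sign_mul hF.contDiff, fun x ξ _ s hs => ?_,
    hF.exists_abs_iterate_pdX_iterate_pdXi_mul_le _, fun c _ hc x ξ hξ => ?_⟩
  · simp only [sign_mul, sign_pos hs, one_mul]
  · have hcx : 0 ≤ c x := hc₀.le.trans (hc x)
    have hJ := japaneseBracket_pos x
    calc 3 / 2 * c₀ * δ * japaneseBracket x ^ (-(1 + δ)) * |ξ| ^ ((1 : ℝ) / 2)
        = 3 / 2 * c₀ * |ξ| ^ ((1 : ℝ) / 2) * (δ * japaneseBracket x ^ (-(1 + δ))) := by ring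
      _ ≤ 3 / 2 * c x * |ξ| ^ ((1 : ℝ) / 2) * deriv (escapeProfile δ) x := by
          gcongr
          exacts [hc x, le_deriv_escapeProfile hδ.le x]
      _ = poissonBracket (fun x ξ => c x * |ξ| ^ ((3 : ℝ) / 2))
            (fun x ξ => SignType.sign ξ * escapeProfile δ x) x ξ := by
          rw [poissonBracket_mul_abs_rpow_sign_mul c _ _ x hξ]
          norm_num
end
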